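/- Let k ≥ 2 and let n_1, …, n_k be integers with n_i ≥ 2 for all i. Then the signed domination number of the complete k-partite graph K_{n_1,…,n_k} satisfies 1 ≤ γ_s(K_{n_1,…,n_k}) ≤ 6. -/

import Mathlib

open scoped Classical

/-- The signed domination number of a finite simple graph `G`: the minimum weight of a
function `f : V → {−1, 1}` such that `f(N[v]) ≥ 1` for every vertex `v`. -/
noncomputable def signedDomNum {V : Type*} [Fintype V] (G : SimpleGraph V) : ℤ :=
  sInf {w : ℤ | ∃ f : V → ℤ, (∀ v, f v = 1 ∨ f v = -1) ∧
    (∀ v, 1 ≤ f v + ∑ u ∈ G.neighborFinset v, f u) ∧ w = ∑ v, f v}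

/-!
In a complete multipartite graph, `f(N[v])` is `f v` plus the weight of `f` minus the sum of `f`
over the part of `v`. If the weight `w` were at most `0`, a nonempty part on which `f` is constantly
`1` would violate `f(N[v]) ≥ 1`, so each nonempty part would have sum at most `w - 2`, contradicting
that the part sums add up to `w`.

Conversely, part sums `s i` with `s i + 2 ≤ ∑ j, s j` come from a signed dominating function as soon
as each `s i` has the parity of the size of its part and does not exceed it in absolute value. Let
`q` be the number of odd parts, and let `r = min q (2 - q % 2)`, so that `r ∈ {0, 1, 2}` has the
parity of `q` and vanishes only if `q` does. Give the even parts the sum `0` and the odd ones the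
sums `±1`, of total `r`, and then raise the sums of two parts with at least two vertices by `2`.
The total weight is `4 + r ≤ 6`.
-/

section SignedDomination

variable {V : Type*} [Fintype V] {G : SimpleGraph V} {f : V → ℤ}

/-- Signed dominating functions of `G`, with the sum over the closed neighborhood `N[v]` written as
`f v` plus the sum over the neighbors of `v`. These are the competitors in `signedDomNum`. -/
structure IsSignedDominating (G : SimpleGraph V) (f : V → ℤ) : Prop where
  eq_one_or_neg_one : ∀ v, f v = 1 ∨ f v = -1
  one_le_add_sum_neighborFinset : ∀ v, 1 ≤ f v + ∑ u ∈ G.neighborFinset v, f u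

theorem isSignedDominating_one (G : SimpleGraph V) : IsSignedDominating G fun _ ↦ 1 where
  eq_one_or_neg_one _ := Or.inl rfl
  one_le_add_sum_neighborFinset _ := by simp

theorem IsSignedDominating.neg_card_le_sum (hf : IsSignedDominating G f) :
    -(Fintype.card V : ℤ) ≤ ∑ v, f v := by
  have hle : ∑ _v : V, (-1 : ℤ) ≤ ∑ v, f v := Finset.sum_le_sum fun v _ ↦ by
    have := hf.eq_one_or_neg_one v
    omega
  simpa using hle

theorem IsSignedDominating.signedDomNum_le (hf : IsSignedDominating G f) :
    signedDomNum G ≤ ∑ v, f v := by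
  refine csInf_le ⟨-(Fintype.card V : ℤ), ?_⟩ ⟨f, hf.1, hf.2, rfl⟩
  rintro _ ⟨g, hsign, hdom, rfl⟩
  exact IsSignedDominating.neg_card_le_sum ⟨hsign, hdom⟩

theorem le_signedDomNum {m : ℤ} (h : ∀ f, IsSignedDominating G f → m ≤ ∑ v, f v) :
    m ≤ signedDomNum G := by
  refine le_csInf ⟨_, _, (isSignedDominating_one G).1, (isSignedDominating_one G).2, rfl⟩ ?_
  rintro _ ⟨f, hsign, hdom, rfl⟩
  exact h f ⟨hsign, hdom⟩

end SignedDomination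

theorem exists_sum_eq_of_abs_le_of_modEq_two {ι : Type*} (s : Finset ι) (p : ι → ℕ) {r : ℤ}
    (hr : |r| ≤ ∑ i ∈ s, (p i : ℤ)) (hpar : r ≡ ∑ i ∈ s, (p i : ℤ) [ZMOD 2]) :
    ∃ t : ι → ℤ, (∀ i, |t i| ≤ p i ∧ t i ≡ p i [ZMOD 2]) ∧ ∑ i ∈ s, t i = r := by
  simp only [abs_le, Int.ModEq] at hr hpar ⊢
  induction s using Finset.induction_on generalizing r with
  | empty =>
    rw [Finset.sum_empty] at hr
    exact ⟨fun i ↦ (p i : ℤ), fun i ↦ ⟨by dsimp only; omega, rfl⟩, by rw [Finset.sum_empty]; omega⟩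
  | insert a s ha ih =>
    rw [Finset.sum_insert ha] at hr hpar
    have hnonneg : 0 ≤ ∑ i ∈ s, (p i : ℤ) := Finset.sum_nonneg fun i _ ↦ Int.natCast_nonneg (p i)
    -- The least admissible value at `a` for which the remainder `r - c` is not too large for `s`.
    obtain ⟨c, hc⟩ : ∃ c : ℤ, c = max (-(p a : ℤ)) (r - ∑ i ∈ s, (p i : ℤ)) := ⟨_, rfl⟩
    obtain ⟨t, ht, hsum⟩ := ih (r := r - c) (by omega) (by omega)
    refine ⟨Function.update t a c, fun i ↦ ?_, ?_⟩
    · obtain rfl | hia := eq_or_ne i a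
      · rw [Function.update_self]
        omega
      · rw [Function.update_of_ne hia]
        exact ht i
    · rw [Finset.sum_insert ha, Function.update_self, Finset.sum_update_of_notMem ha, hsum]
      ring

theorem exists_sign_sum_eq {α : Type*} [Fintype α] {r : ℤ} (hr : |r| ≤ Fintype.card α)
    (hpar : r ≡ Fintype.card α [ZMOD 2]) :
    ∃ f : α → ℤ, (∀ a, f a = 1 ∨ f a = -1) ∧ ∑ a, f a = r := by
  obtain ⟨f, hf, hsum⟩ := exists_sum_eq_of_abs_le_of_modEq_two (r := r) (Finset.univ : Finset α)
    (fun _ ↦ 1) (by simpa using hr) (by simpa using hpar)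
  refine ⟨f, fun a ↦ ?_, hsum⟩
  have := hf a
  simp only [abs_le, Int.ModEq] at this
  omega

theorem exists_abs_le_one_modEq_two_le_sum {ι : Type*} [Fintype ι] (p : ι → ℕ) :
    ∃ t : ι → ℤ, (∀ i, |t i| ≤ 1 ∧ t i ≡ p i [ZMOD 2] ∧ t i ≤ ∑ j, t j) ∧
      0 ≤ ∑ i, t i ∧ ∑ i, t i ≤ 2 := by
  obtain ⟨q, hq⟩ : ∃ q : ℤ, q = ∑ i, ((p i % 2 : ℕ) : ℤ) := ⟨_, rfl⟩
  have hnonneg : 0 ≤ q := hq ▸ Finset.sum_nonneg fun i _ ↦ Int.natCast_nonneg _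
  have hle (i : ι) : ((p i % 2 : ℕ) : ℤ) ≤ q :=
    hq ▸ Finset.single_le_sum (f := fun i ↦ ((p i % 2 : ℕ) : ℤ))
      (fun _ _ ↦ Int.natCast_nonneg _) (Finset.mem_univ i)
  obtain ⟨t, ht, hsum⟩ := exists_sum_eq_of_abs_le_of_modEq_two (r := min q (2 - q % 2))
    Finset.univ (fun i ↦ p i % 2) (by rw [← hq, abs_le]; omega) (by rw [← hq, Int.ModEq]; omega)
  simp only [abs_le, Int.ModEq] at ht ⊢
  refine ⟨t, fun i ↦ ?_, by omega, by omega⟩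
  have := ht i
  have := hle i
  omega

theorem exists_abs_le_modEq_two_add_two_le_sum_le_six {ι : Type*} [Fintype ι] (p : ι → ℕ)
    {i₀ i₁ : ι} (hne : i₀ ≠ i₁) (h₀ : 2 ≤ p i₀) (h₁ : 2 ≤ p i₁) :
    ∃ s : ι → ℤ, (∀ i, |s i| ≤ p i ∧ s i ≡ p i [ZMOD 2] ∧ s i + 2 ≤ ∑ j, s j) ∧
      ∑ i, s i ≤ 6 := by
  obtain ⟨t, ht, hnonneg, hle⟩ := exists_abs_le_one_modEq_two_le_sum p
  let s (i : ι) : ℤ := t i + if i ∈ ({i₀, i₁} : Finset ι) then 2 else 0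
  have hsum : ∑ i, s i = ∑ i, t i + 4 := by
    rw [Finset.sum_add_distrib, Finset.sum_ite_mem, Finset.univ_inter, Finset.sum_pair hne]
    rfl
  have hlarge (i : ι) (hi : i ∈ ({i₀, i₁} : Finset ι)) : 2 ≤ p i := by
    obtain rfl | rfl : i = i₀ ∨ i = i₁ := by simpa using hi
    exacts [h₀, h₁]
  refine ⟨s, fun i ↦ ?_, by omega⟩
  rw [hsum]
  simp only [s, abs_le, Int.ModEq] at ht ⊢
  have := ht i
  split_ifs with hi
  · have := hlarge i hi
    omega
  · omega

section CompleteMultipartite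

open SimpleGraph (completeMultipartiteGraph)

variable {ι : Type*} [Fintype ι] {V : ι → Type*} [∀ i, Fintype (V i)]

theorem sum_neighborFinset_completeMultipartiteGraph {M : Type*} [AddCommGroup M]
    (f : (Σ i, V i) → M) (v : Σ i, V i) [Fintype ((completeMultipartiteGraph V).neighborSet v)] :
    ∑ u ∈ (completeMultipartiteGraph V).neighborFinset v, f u =
      ∑ u, f u - ∑ x, f ⟨v.1, x⟩ := by
  have hneighbors : (completeMultipartiteGraph V).neighborFinset v =
      Finset.univ.filter (fun u ↦ ¬v.1 = u.1) := by
    ext u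
    simp
  have hpart : Finset.univ.filter (fun u : Σ i, V i ↦ v.1 = u.1) =
      Finset.univ.map (Function.Embedding.sigmaMk v.1) := by
    ext ⟨i, x⟩
    simp only [Finset.mem_filter_univ, Finset.mem_map, Finset.mem_univ, true_and,
      Function.Embedding.sigmaMk_apply]
    exact ⟨by rintro rfl; exact ⟨x, rfl⟩, fun ⟨_, h⟩ ↦ congrArg Sigma.fst h⟩
  rw [hneighbors, ← Finset.sum_filter_add_sum_filter_not Finset.univ (fun u ↦ v.1 = u.1) f,
    hpart, Finset.sum_map]
  exact (add_sub_cancel_left _ _).symm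

theorem isSignedDominating_completeMultipartiteGraph_iff {f : (Σ i, V i) → ℤ} :
    IsSignedDominating (completeMultipartiteGraph V) f ↔
      (∀ v, f v = 1 ∨ f v = -1) ∧ ∀ v : Σ i, V i, ∑ x, f ⟨v.1, x⟩ < f v + ∑ u, f u := by
  refine ⟨fun h ↦ ⟨h.1, fun v ↦ ?_⟩, fun h ↦ ⟨h.1, fun v ↦ ?_⟩⟩
  · have := h.2 v
    rw [sum_neighborFinset_completeMultipartiteGraph] at this
    omega
  · have := h.2 v
    rw [sum_neighborFinset_completeMultipartiteGraph]
    omega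

theorem IsSignedDominating.sum_part_add_two_le {f : (Σ i, V i) → ℤ}
    (hf : IsSignedDominating (completeMultipartiteGraph V) f) (hw : ∑ v, f v ≤ 0) (i : ι)
    [Nonempty (V i)] : ∑ x, f ⟨i, x⟩ + 2 ≤ ∑ v, f v := by
  obtain ⟨hsign, hdom⟩ := isSignedDominating_completeMultipartiteGraph_iff.1 hf
  obtain ⟨x, hx⟩ : ∃ x, f ⟨i, x⟩ = -1 := by
    by_contra! hne
    have hone (x : V i) : f ⟨i, x⟩ = 1 := (hsign _).resolve_right (hne x)
    obtain ⟨x⟩ := ‹Nonempty (V i)›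
    have hlt : ∑ y, f ⟨i, y⟩ < f ⟨i, x⟩ + ∑ v, f v := hdom ⟨i, x⟩
    have hcard : ∑ y, f ⟨i, y⟩ = Fintype.card (V i) := by simp [hone]
    have hpos : 0 < Fintype.card (V i) := Fintype.card_pos_iff.2 ⟨x⟩
    have := hone x
    omega
  have hlt : ∑ y, f ⟨i, y⟩ < f ⟨i, x⟩ + ∑ v, f v := hdom ⟨i, x⟩
  omega

theorem one_le_signedDomNum_completeMultipartiteGraph [Nonempty (Σ i, V i)] :
    1 ≤ signedDomNum (completeMultipartiteGraph V) := by
  refine le_signedDomNum fun f hf ↦ ?_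
  by_contra! hlt
  have hw : ∑ v, f v ≤ 0 := by omega
  have hnonpos (i : ι) : ∑ x, f ⟨i, x⟩ ≤ 0 := by
    cases isEmpty_or_nonempty (V i)
    · simp
    · have := hf.sum_part_add_two_le hw i
      omega
  obtain ⟨i, x⟩ := ‹Nonempty (Σ i, V i)›
  have : Nonempty (V i) := ⟨x⟩
  have hle : ∑ v, f v ≤ ∑ x, f ⟨i, x⟩ := by
    rw [Fintype.sum_sigma, ← Finset.add_sum_erase _ _ (Finset.mem_univ i)]
    have := Finset.sum_nonpos fun j (_ : j ∈ Finset.univ.erase i) ↦ hnonpos j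
    omega
  have := hf.sum_part_add_two_le hw i
  omega

theorem signedDomNum_completeMultipartiteGraph_le_sum {s : ι → ℤ}
    (hs : ∀ i, |s i| ≤ Fintype.card (V i) ∧ s i ≡ Fintype.card (V i) [ZMOD 2] ∧
      s i + 2 ≤ ∑ j, s j) :
    signedDomNum (completeMultipartiteGraph V) ≤ ∑ i, s i := by
  choose g hsign hsum using fun i ↦ exists_sign_sum_eq (hs i).1 (hs i).2.1
  have hweight : ∑ v : Σ i, V i, g v.1 v.2 = ∑ i, s i := by
    simp only [Fintype.sum_sigma, hsum]
  have hdom : IsSignedDominating (completeMultipartiteGraph V) fun v ↦ g v.1 v.2 := by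
    refine isSignedDominating_completeMultipartiteGraph_iff.2 ⟨fun v ↦ hsign v.1 v.2, fun v ↦ ?_⟩
    rw [hweight, hsum]
    have := hsign v.1 v.2
    have := (hs v.1).2.2
    omega
  exact hdom.signedDomNum_le.trans_eq hweight

theorem signedDomNum_between_one_and_six_general {i₀ i₁ : ι} (hne : i₀ ≠ i₁)
    (h₀ : 2 ≤ Fintype.card (V i₀)) (h₁ : 2 ≤ Fintype.card (V i₁)) :
    1 ≤ signedDomNum (completeMultipartiteGraph V) ∧
      signedDomNum (completeMultipartiteGraph V) ≤ 6 := by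
  obtain ⟨s, hs, hsix⟩ :=
    exists_abs_le_modEq_two_add_two_le_sum_le_six (fun i ↦ Fintype.card (V i)) hne h₀ h₁
  obtain ⟨x⟩ : Nonempty (V i₀) := Fintype.card_pos_iff.1 (by omega)
  have : Nonempty (Σ i, V i) := ⟨⟨i₀, x⟩⟩
  exact ⟨one_le_signedDomNum_completeMultipartiteGraph,
    (signedDomNum_completeMultipartiteGraph_le_sum hs).trans hsix⟩

end CompleteMultipartite

theorem signedDomNum_between_one_and_six
    (k : ℕ) (hk : 2 ≤ k) (n : Fin k → ℕ) (hn : ∀ i, 2 ≤ n i) :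
    1 ≤ signedDomNum (SimpleGraph.completeMultipartiteGraph fun i : Fin k => Fin (n i)) ∧
      signedDomNum (SimpleGraph.completeMultipartiteGraph fun i : Fin k => Fin (n i)) ≤ 6 :=
  signedDomNum_between_one_and_six_general (i₀ := ⟨0, by omega⟩) (i₁ := ⟨1, by omega⟩)
    (by simp) (by simpa using hn _) (by simpa using hn _)
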